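/- arXiv:1807.06952 — 3 statements merged into one kernel-verified Lean document; each statement's English description precedes it below -/
import Mathlib

section
/- Let μ = e^{−V(x)} dx be a log-concave measure on ℝⁿ with V convex and C², and let K be a convex body such that ∫_K ∂V/∂xᵢ dμ = 0 for all i = 1,…,n. Then ∫_K |∇V|² dμ ≤ ∫_K ΔV dμ. -/
open MeasureTheory

/-!
By the Prékopa–Leindler inequality, `Z v = ∫_K e^{-V(x + v)} dx` is a log-concave function of the
translation `v`. Hence the second derivative of `log Z` at `0` in any direction is nonpositive, i.e.
`Z(0) ∂²Z(0) ≤ (∂Z(0))²`. Differentiating under the integral, `∂Z(0) = -∫_K ∂V dμ` and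
`∂²Z(0) = ∫_K ((∂V)² - ∂²V) dμ`, so the variance of `∂V` on `K` is at most the mean of `∂²V`.
The barycenter condition says that the mean of each `∂V` vanishes; sum over the coordinates.
-/

section PrekopaLeindler

open Set
open scoped ENNReal Pointwise

theorem volume_add_volume_le_volume_add_of_isCompact {A B : Set ℝ} (hA : IsCompact A)
    (hB : IsCompact B) (hA₀ : A.Nonempty) (hB₀ : B.Nonempty) :
    volume A + volume B ≤ volume (A + B) := by
  obtain ⟨a, haA, ha⟩ := hA.exists_isGreatest hA₀
  obtain ⟨b, hbB, hb⟩ := hB.exists_isLeast hB₀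
  have overlap : (b +ᵥ A) ∩ (a +ᵥ B) ⊆ {a + b} := by
    rintro _ ⟨⟨x, hx, rfl⟩, ⟨y, hy, hxy⟩⟩
    have hxa := ha hx
    have hby := hb hy
    simp only [vadd_eq_add, mem_singleton_iff] at hxy ⊢
    linarith
  have disjoint : AEDisjoint volume (b +ᵥ A) (a +ᵥ B) :=
    measure_mono_null overlap Real.volume_singleton
  calc volume A + volume B = volume (b +ᵥ A) + volume (a +ᵥ B) := by simp only [measure_vadd]
    _ = volume ((b +ᵥ A) ∪ (a +ᵥ B)) :=
      (measure_union₀ (hB.vadd a).measurableSet.nullMeasurableSet disjoint).symm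
    _ ≤ volume (A + B) := by
      refine measure_mono (union_subset ?_ (vadd_set_subset_add haA))
      rw [add_comm A B]
      exact vadd_set_subset_add hbB

theorem measure_add_le_of_forall_isCompact {α : Type*} [TopologicalSpace α] [MeasurableSpace α]
    {μ : Measure α} [μ.InnerRegular] {A : Set α} (hA : MeasurableSet A) (hA₀ : A.Nonempty)
    {c d : ℝ≥0∞} (h : ∀ K ⊆ A, IsCompact K → K.Nonempty → μ K + c ≤ d) : μ A + c ≤ d := by
  obtain ⟨a, ha⟩ := hA₀
  simp_rw [hA.measure_eq_iSup_isCompact, iSup_and']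
  rw [ENNReal.biSup_add' ⟨∅, empty_subset A, isCompact_empty⟩]
  refine iSup₂_le fun K hK => ?_
  calc μ K + c ≤ μ (insert a K) + c := by gcongr; exact subset_insert a K
    _ ≤ d := h _ (insert_subset ha hK.1) (hK.2.insert a) (insert_nonempty a K)

theorem volume_add_volume_le_volume_add {A B : Set ℝ} (hA : MeasurableSet A)
    (hB : MeasurableSet B) (hA₀ : A.Nonempty) (hB₀ : B.Nonempty) :
    volume A + volume B ≤ volume (A + B) := by
  refine measure_add_le_of_forall_isCompact hA hA₀ fun K hKA hK hK₀ => ?_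
  rw [add_comm]
  refine measure_add_le_of_forall_isCompact hB hB₀ fun L hLB hL hL₀ => ?_
  rw [add_comm]
  exact (volume_add_volume_le_volume_add_of_isCompact hK hL hK₀ hL₀).trans
    (measure_mono (add_subset_add hKA hLB))

theorem ofReal_mul_volume_add_le_volume_smul_add_smul {A B : Set ℝ} (hA : MeasurableSet A)
    (hB : MeasurableSet B) (hA₀ : A.Nonempty) (hB₀ : B.Nonempty) {a b : ℝ} (ha : 0 < a)
    (hb : 0 < b) :
    ENNReal.ofReal a * volume A + ENNReal.ofReal b * volume B ≤ volume (a • A + b • B) := by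
  have h := volume_add_volume_le_volume_add (hA.const_smul₀ a) (hB.const_smul₀ b)
    hA₀.smul_set hB₀.smul_set
  simpa [Measure.addHaar_smul, abs_of_pos ha, abs_of_pos hb] using h

theorem lintegral_eq_lintegral_measure_ofReal_lt {α : Type*} [MeasurableSpace α] (μ : Measure α)
    [SFinite μ] {f : α → ℝ≥0∞} (hf : Measurable f) :
    ∫⁻ x, f x ∂μ = ∫⁻ t in Ioi (0 : ℝ), μ {x | ENNReal.ofReal t < f x} := by
  have subgraph : MeasurableSet {p : α × ℝ | ENNReal.ofReal p.2 < f p.1} :=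
    measurableSet_lt (by fun_prop) (by fun_prop)
  have volume_fiber (c : ℝ≥0∞) :
      c = volume.restrict (Ioi 0) {t : ℝ | ENNReal.ofReal t < c} := by
    rw [Measure.restrict_apply (measurableSet_lt (by fun_prop) (by fun_prop))]
    obtain rfl | hc := eq_or_ne c ∞
    · simp
    · have : {t : ℝ | ENNReal.ofReal t < c} ∩ Ioi 0 = Ioo 0 c.toReal := by
        ext t
        simp only [mem_inter_iff, mem_ofPred_eq, mem_Ioi, mem_Ioo, and_comm (b := 0 < t),
          and_congr_right_iff]
        exact fun ht => ENNReal.ofReal_lt_iff_lt_toReal ht.le hc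
      simp [this, ENNReal.ofReal_toReal hc]
  calc ∫⁻ x, f x ∂μ
      = ∫⁻ x, volume.restrict (Ioi 0) {t : ℝ | ENNReal.ofReal t < f x} ∂μ :=
        lintegral_congr fun x => volume_fiber (f x)
    _ = (μ.prod (volume.restrict (Ioi 0))) {p : α × ℝ | ENNReal.ofReal p.2 < f p.1} :=
        (Measure.prod_apply subgraph).symm
    _ = ∫⁻ t in Ioi (0 : ℝ), μ {x | ENNReal.ofReal t < f x} := Measure.prod_apply_symm subgraph

theorem rpow_mul_rpow_le_ofReal_mul_add_ofReal_mul {a b : ℝ} (ha : 0 < a) (hb : 0 < b)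
    (hab : a + b = 1) (x y : ℝ≥0∞) :
    x ^ a * y ^ b ≤ ENNReal.ofReal a * x + ENNReal.ofReal b * y := by
  have young := ENNReal.young_inequality (x ^ a) (y ^ b) (.inv_inv ha hb hab)
  rwa [ENNReal.rpow_rpow_inv ha.ne', ENNReal.rpow_rpow_inv hb.ne', ENNReal.ofReal_inv_of_pos ha,
    ENNReal.ofReal_inv_of_pos hb, div_eq_mul_inv, div_eq_mul_inv, inv_inv, inv_inv, mul_comm x,
    mul_comm y] at young

variable {a b : ℝ} {f g h : ℝ → ℝ≥0∞}

theorem ofReal_mul_lintegral_add_le_lintegral (ha : 0 < a) (hb : 0 < b) (hab : a + b = 1)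
    (hf : Measurable f) (hg : Measurable g) (hh : Measurable h)
    (hf₁ : ⨆ x, f x = 1) (hg₁ : ⨆ x, g x = 1)
    (H : ∀ x y, f x ^ a * g y ^ b ≤ h (a • x + b • y)) :
    ENNReal.ofReal a * (∫⁻ x, f x) + ENNReal.ofReal b * (∫⁻ x, g x) ≤ ∫⁻ x, h x := by
  have measurable_tail (u : ℝ → ℝ≥0∞) :
      Measurable fun t : ℝ => volume {x | ENNReal.ofReal t < u x} :=
    Antitone.measurable fun s t hst =>
      measure_mono fun x hx => (ENNReal.ofReal_le_ofReal hst).trans_lt hx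
  rw [lintegral_eq_lintegral_measure_ofReal_lt _ hf, lintegral_eq_lintegral_measure_ofReal_lt _ hg,
    lintegral_eq_lintegral_measure_ofReal_lt _ hh, ← lintegral_const_mul _ (measurable_tail f),
    ← lintegral_const_mul _ (measurable_tail g),
    ← lintegral_add_left ((measurable_tail f).const_mul _)]
  refine setLIntegral_mono' measurableSet_Ioi fun t _ => ?_
  obtain ht₁ | ht₁ := le_or_gt 1 (ENNReal.ofReal t)
  · have empty_tail {u : ℝ → ℝ≥0∞} (hu : ⨆ x, u x = 1) : {x | ENNReal.ofReal t < u x} = ∅ :=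
      eq_empty_of_forall_notMem fun x => not_lt.2 (((le_iSup u x).trans_eq hu).trans ht₁)
    simp [empty_tail hf₁, empty_tail hg₁]
  · have nonempty_tail {u : ℝ → ℝ≥0∞} (hu : ⨆ x, u x = 1) :
        {x | ENNReal.ofReal t < u x}.Nonempty :=
      lt_iSup_iff.1 (ht₁.trans_eq hu.symm)
    refine (ofReal_mul_volume_add_le_volume_smul_add_smul (measurableSet_lt measurable_const hf)
      (measurableSet_lt measurable_const hg) (nonempty_tail hf₁)
      (nonempty_tail hg₁) ha hb).trans (measure_mono ?_)
    rintro _ ⟨_, ⟨x, hx, rfl⟩, _, ⟨y, hy, rfl⟩, rfl⟩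
    calc ENNReal.ofReal t = ENNReal.ofReal t ^ a * ENNReal.ofReal t ^ b := by
          rw [← ENNReal.rpow_add_of_nonneg _ _ ha.le hb.le, hab, ENNReal.rpow_one]
      _ < f x ^ a * g y ^ b :=
          ENNReal.mul_lt_mul (ENNReal.rpow_lt_rpow hx ha) (ENNReal.rpow_lt_rpow hy hb)
      _ ≤ h (a • x + b • y) := H x y

theorem rpow_lintegral_mul_rpow_lintegral_le_of_iSup_ne_top (ha : 0 < a) (hb : 0 < b)
    (hab : a + b = 1) (hf : Measurable f) (hg : Measurable g) (hh : Measurable h)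
    (hf_top : ⨆ x, f x ≠ ∞) (hg_top : ⨆ x, g x ≠ ∞)
    (H : ∀ x y, f x ^ a * g y ^ b ≤ h (a • x + b • y)) :
    (∫⁻ x, f x) ^ a * (∫⁻ x, g x) ^ b ≤ ∫⁻ x, h x := by
  set α := ⨆ x, f x
  set β := ⨆ x, g x
  obtain hα₀ | hα₀ := eq_or_ne α 0
  · have : f = 0 := funext fun x => ENNReal.iSup_eq_zero.1 hα₀ x
    simp [this, ha]
  obtain hβ₀ | hβ₀ := eq_or_ne β 0
  · have : g = 0 := funext fun x => ENNReal.iSup_eq_zero.1 hβ₀ x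
    simp [this, hb]
  set c := (α⁻¹) ^ a * (β⁻¹) ^ b with hc
  have rescale (x y : ℝ≥0∞) : (α⁻¹ * x) ^ a * (β⁻¹ * y) ^ b = c * (x ^ a * y ^ b) := by
    rw [ENNReal.mul_rpow_of_nonneg _ _ ha.le, ENNReal.mul_rpow_of_nonneg _ _ hb.le,
      mul_mul_mul_comm]
  have normalized := (rpow_mul_rpow_le_ofReal_mul_add_ofReal_mul ha hb hab _ _).trans
    (ofReal_mul_lintegral_add_le_lintegral (f := fun x => α⁻¹ * f x) (g := fun x => β⁻¹ * g x)
      (h := fun x => c * h x) ha hb hab (hf.const_mul _) (hg.const_mul _) (hh.const_mul _)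
      (by rw [← ENNReal.mul_iSup, ENNReal.inv_mul_cancel hα₀ hf_top])
      (by rw [← ENNReal.mul_iSup, ENNReal.inv_mul_cancel hβ₀ hg_top])
      fun x y => by rw [rescale]; gcongr; exact H x y)
  rw [lintegral_const_mul _ hf, lintegral_const_mul _ hg, lintegral_const_mul _ hh, rescale]
    at normalized
  have hc₀ : c ≠ 0 := by simp [hc, hf_top, hg_top, ha.not_gt, hb.not_gt, hα₀, hβ₀]
  have hc_top : c ≠ ∞ := ENNReal.mul_ne_top
    (ENNReal.rpow_ne_top_of_nonneg ha.le (ENNReal.inv_ne_top.2 hα₀))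
    (ENNReal.rpow_ne_top_of_nonneg hb.le (ENNReal.inv_ne_top.2 hβ₀))
  exact (ENNReal.mul_le_mul_iff_right hc₀ hc_top).1 normalized

theorem lintegral_eq_iSup_lintegral_min_natCast {α : Type*} [MeasurableSpace α] (μ : Measure α)
    {f : α → ℝ≥0∞} (hf : Measurable f) : ∫⁻ x, f x ∂μ = ⨆ n : ℕ, ∫⁻ x, min (f x) n ∂μ := by
  rw [← lintegral_iSup (fun n => hf.min measurable_const)
    fun m n hmn x => min_le_min_left _ (Nat.cast_le.2 hmn)]
  refine lintegral_congr fun x => ?_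
  rw [← inf_iSup_eq, ENNReal.iSup_natCast, inf_top_eq]

theorem rpow_lintegral_mul_rpow_lintegral_le (ha : 0 < a) (hb : 0 < b)
    (hab : a + b = 1) (hf : Measurable f) (hg : Measurable g) (hh : Measurable h)
    (H : ∀ x y, f x ^ a * g y ^ b ≤ h (a • x + b • y)) :
    (∫⁻ x, f x) ^ a * (∫⁻ x, g x) ^ b ≤ ∫⁻ x, h x := by
  have rpow_iSup {r : ℝ} (hr : 0 < r) (u : ℕ → ℝ≥0∞) : (⨆ n, u n) ^ r = ⨆ n, u n ^ r :=
    (ENNReal.orderIsoRpow r hr).map_iSup u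
  have iSup_min_ne_top (u : ℝ → ℝ≥0∞) (n : ℕ) : ⨆ x, min (u x) n ≠ ∞ :=
    ne_top_of_le_ne_top (ENNReal.natCast_ne_top n) (iSup_le fun x => min_le_right _ _)
  rw [lintegral_eq_iSup_lintegral_min_natCast _ hf, lintegral_eq_iSup_lintegral_min_natCast _ hg,
    rpow_iSup ha, rpow_iSup hb]
  simp_rw [ENNReal.iSup_mul, ENNReal.mul_iSup]
  refine iSup_le fun m => iSup_le fun n =>
    rpow_lintegral_mul_rpow_lintegral_le_of_iSup_ne_top ha hb hab (hf.min measurable_const)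
      (hg.min measurable_const) hh (iSup_min_ne_top f m) (iSup_min_ne_top g n) fun x y => ?_
  refine le_trans ?_ (H x y)
  gcongr <;> exact min_le_left _ _

/-- The measure `μ` satisfies the Prékopa–Leindler inequality for all weights `a + b = 1`. As a
predicate on measures, it can be transported along linear maps and to products. -/
def SatisfiesPrekopaLeindler {E : Type*} [AddCommGroup E] [Module ℝ E] [MeasurableSpace E]
    (μ : Measure E) : Prop :=
  ∀ ⦃a b : ℝ⦄, 0 < a → 0 < b → a + b = 1 → ∀ ⦃f g h : E → ℝ≥0∞⦄,
    Measurable f → Measurable g → Measurable h →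
    (∀ x y, f x ^ a * g y ^ b ≤ h (a • x + b • y)) →
    (∫⁻ x, f x ∂μ) ^ a * (∫⁻ x, g x ∂μ) ^ b ≤ ∫⁻ x, h x ∂μ

namespace SatisfiesPrekopaLeindler

variable {E F : Type*} [AddCommGroup E] [Module ℝ E] [MeasurableSpace E]
  [AddCommGroup F] [Module ℝ F] [MeasurableSpace F] {μ : Measure E} {ν : Measure F}

theorem volume_real : SatisfiesPrekopaLeindler (volume : Measure ℝ) :=
  fun _ _ ha hb hab _ _ _ => rpow_lintegral_mul_rpow_lintegral_le ha hb hab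

theorem dirac (x : E) : SatisfiesPrekopaLeindler (Measure.dirac x) := by
  intro a b _ _ hab f g h hf hg hh H
  have hx : a • x + b • x = x := Convex.combo_self hab x
  simpa only [lintegral_dirac' _ hf, lintegral_dirac' _ hg, lintegral_dirac' _ hh, hx] using H x x

theorem map (hμ : SatisfiesPrekopaLeindler μ) {L : E →ₗ[ℝ] F} (hL : Measurable L) :
    SatisfiesPrekopaLeindler (μ.map L) := by
  intro a b ha hb hab f g h hf hg hh H
  rw [lintegral_map hf hL, lintegral_map hg hL, lintegral_map hh hL]
  refine hμ ha hb hab (hf.comp hL) (hg.comp hL) (hh.comp hL) fun x y => ?_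
  simpa only [Function.comp_apply, map_add, map_smul] using H (L x) (L y)

theorem smul (hμ : SatisfiesPrekopaLeindler μ) (c : ℝ≥0∞) : SatisfiesPrekopaLeindler (c • μ) := by
  intro a b ha hb hab f g h hf hg hh H
  simp only [lintegral_smul_measure, smul_eq_mul]
  calc (c * ∫⁻ x, f x ∂μ) ^ a * (c * ∫⁻ x, g x ∂μ) ^ b
      = c ^ (a + b) * ((∫⁻ x, f x ∂μ) ^ a * (∫⁻ x, g x ∂μ) ^ b) := by
        rw [ENNReal.mul_rpow_of_nonneg _ _ ha.le, ENNReal.mul_rpow_of_nonneg _ _ hb.le,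
          ENNReal.rpow_add_of_nonneg _ _ ha.le hb.le, mul_mul_mul_comm]
    _ ≤ c * ∫⁻ x, h x ∂μ := by
        rw [hab, ENNReal.rpow_one]
        gcongr
        exact hμ ha hb hab hf hg hh H

theorem prod [SFinite ν] (hμ : SatisfiesPrekopaLeindler μ) (hν : SatisfiesPrekopaLeindler ν) :
    SatisfiesPrekopaLeindler (μ.prod ν) := by
  intro a b ha hb hab f g h hf hg hh H
  rw [lintegral_prod _ hf.aemeasurable, lintegral_prod _ hg.aemeasurable,
    lintegral_prod _ hh.aemeasurable]
  refine hμ ha hb hab hf.lintegral_prod_right' hg.lintegral_prod_right'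
    hh.lintegral_prod_right' fun s t => ?_
  exact hν ha hb hab (hf.comp measurable_prodMk_left) (hg.comp measurable_prodMk_left)
    (hh.comp measurable_prodMk_left) fun x y => H (s, x) (t, y)

end SatisfiesPrekopaLeindler

section Haar

variable {E F : Type*} [NormedAddCommGroup E] [NormedSpace ℝ E] [MeasurableSpace E] [BorelSpace E]
  [NormedAddCommGroup F] [NormedSpace ℝ F] [FiniteDimensional ℝ F] [MeasurableSpace F]
  [BorelSpace F]

theorem SatisfiesPrekopaLeindler.of_continuousLinearEquiv {μ : Measure E} [μ.IsAddHaarMeasure]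
    (hμ : SatisfiesPrekopaLeindler μ) (L : E ≃L[ℝ] F) (ν : Measure F) [ν.IsAddHaarMeasure] :
    SatisfiesPrekopaLeindler ν := by
  have : (μ.map L).IsAddHaarMeasure := L.isAddHaarMeasure_map μ
  rw [Measure.isAddLeftInvariant_eq_smul ν (μ.map L)]
  exact (hμ.map (L := L.toLinearEquiv.toLinearMap) L.continuous.measurable).smul _

theorem satisfiesPrekopaLeindler_volume_pi (n : ℕ) :
    SatisfiesPrekopaLeindler (volume : Measure (Fin n → ℝ)) := by
  induction n with
  | zero => rw [volume_pi, Measure.pi_of_empty _ 0]; exact .dirac 0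
  | succ n ih =>
    exact (SatisfiesPrekopaLeindler.volume_real.prod ih).of_continuousLinearEquiv
      (Fin.consEquivL ℝ fun _ : Fin (n + 1) => ℝ) volume

theorem satisfiesPrekopaLeindler_of_isAddHaarMeasure (μ : Measure F) [μ.IsAddHaarMeasure] :
    SatisfiesPrekopaLeindler μ :=
  (satisfiesPrekopaLeindler_volume_pi (Module.finrank ℝ F)).of_continuousLinearEquiv
    (ContinuousLinearEquiv.ofFinrankEq (Module.finrank_fin_fun ℝ)) μ

end Haar

end PrekopaLeindler

section LogConcavity

open Real
open scoped ENNReal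

variable {E F : Type*} [AddCommGroup E] [Module ℝ E] [AddCommGroup F] [Module ℝ F] {s : Set F}
  {K : Set E} {W : F → E → ℝ}

theorem indicator_exp_neg_rpow_mul_rpow_le
    (hW : ConvexOn ℝ (s ×ˢ K) fun p => W p.1 p.2) {u v : F} (hu : u ∈ s) (hv : v ∈ s) {a b : ℝ}
    (ha : 0 < a) (hb : 0 < b) (hab : a + b = 1) (x y : E) :
    K.indicator (fun x => ENNReal.ofReal (exp (-W u x))) x ^ a *
        K.indicator (fun x => ENNReal.ofReal (exp (-W v x))) y ^ b ≤
      K.indicator (fun x => ENNReal.ofReal (exp (-W (a • u + b • v) x))) (a • x + b • y) := by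
  by_cases hx : x ∈ K
  swap; · simp [hx, ha]
  by_cases hy : y ∈ K
  swap; · simp [hy, hb]
  have hux : (u, x) ∈ s ×ˢ K := ⟨hu, hx⟩
  have hvy : (v, y) ∈ s ×ˢ K := ⟨hv, hy⟩
  have hxy : a • x + b • y ∈ K := (hW.1 hux hvy ha.le hb.le hab).2
  have hW_le : W (a • u + b • v) (a • x + b • y) ≤ a * W u x + b * W v y :=
    hW.2 hux hvy ha.le hb.le hab
  rw [Set.indicator_of_mem hx, Set.indicator_of_mem hy, Set.indicator_of_mem hxy,
    ENNReal.ofReal_rpow_of_pos (exp_pos _), ENNReal.ofReal_rpow_of_pos (exp_pos _),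
    ← ENNReal.ofReal_mul (by positivity), ← exp_mul, ← exp_mul, ← exp_add]
  gcongr
  linarith

namespace SatisfiesPrekopaLeindler

variable [MeasurableSpace E] {μ : Measure E}

theorem setIntegral_exp_neg_rpow_mul_rpow_le (hμ : SatisfiesPrekopaLeindler μ)
    (hW : ConvexOn ℝ (s ×ˢ K) fun p => W p.1 p.2) (hK : MeasurableSet K)
    (hW_meas : ∀ u ∈ s, Measurable (W u))
    (hW_int : ∀ u ∈ s, IntegrableOn (fun x => exp (-W u x)) K μ) {u v : F} (hu : u ∈ s)
    (hv : v ∈ s) {a b : ℝ} (ha : 0 < a) (hb : 0 < b) (hab : a + b = 1) :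
    (∫ x in K, exp (-W u x) ∂μ) ^ a * (∫ x in K, exp (-W v x) ∂μ) ^ b ≤
      ∫ x in K, exp (-W (a • u + b • v) x) ∂μ := by
  obtain rfl | ⟨x₀, hx₀⟩ := K.eq_empty_or_nonempty
  · simp [ha.ne']
  have combo_mem : a • u + b • v ∈ s :=
    (hW.1 (Set.mk_mem_prod hu hx₀) (Set.mk_mem_prod hv hx₀) ha.le hb.le hab).1
  have measurable_indicator {z : F} (hz : z ∈ s) :
      Measurable (K.indicator fun x => ENNReal.ofReal (exp (-W z x))) :=
    (hW_meas z hz).neg.exp.ennreal_ofReal.indicator hK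
  have lintegral_indicator_eq {z : F} (hz : z ∈ s) :
      ∫⁻ x, K.indicator (fun x => ENNReal.ofReal (exp (-W z x))) x ∂μ =
        ENNReal.ofReal (∫ x in K, exp (-W z x) ∂μ) := by
    rw [lintegral_indicator hK, ofReal_integral_eq_lintegral_ofReal (hW_int z hz)
      (.of_forall fun x => (exp_pos _).le)]
  have setIntegral_nonneg (z : F) : 0 ≤ ∫ x in K, exp (-W z x) ∂μ :=
    integral_nonneg fun x => (exp_pos _).le
  have key := hμ ha hb hab (measurable_indicator hu) (measurable_indicator hv)
    (measurable_indicator combo_mem) (indicator_exp_neg_rpow_mul_rpow_le hW hu hv ha hb hab)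
  rwa [lintegral_indicator_eq hu, lintegral_indicator_eq hv, lintegral_indicator_eq combo_mem,
    ENNReal.ofReal_rpow_of_nonneg (setIntegral_nonneg u) ha.le,
    ENNReal.ofReal_rpow_of_nonneg (setIntegral_nonneg v) hb.le,
    ← ENNReal.ofReal_mul (rpow_nonneg (setIntegral_nonneg u) a),
    ENNReal.ofReal_le_ofReal_iff (setIntegral_nonneg _)] at key

theorem concaveOn_log_setIntegral_exp_neg (hμ : SatisfiesPrekopaLeindler μ)
    (hW : ConvexOn ℝ (s ×ˢ K) fun p => W p.1 p.2) (hK : MeasurableSet K) (hK₀ : μ K ≠ 0)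
    (hW_meas : ∀ u ∈ s, Measurable (W u))
    (hW_int : ∀ u ∈ s, IntegrableOn (fun x => exp (-W u x)) K μ) :
    ConcaveOn ℝ s fun u => log (∫ x in K, exp (-W u x) ∂μ) := by
  have : NeZero (μ.restrict K) := ⟨by rwa [Ne, Measure.restrict_eq_zero]⟩
  have integral_pos {u : F} (hu : u ∈ s) : 0 < ∫ x in K, exp (-W u x) ∂μ :=
    integral_exp_pos (hW_int u hu)
  obtain ⟨x₀, hx₀⟩ : K.Nonempty := nonempty_of_measure_ne_zero hK₀
  refine concaveOn_iff_forall_pos.2 ⟨fun u hu v hv a b ha hb hab =>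
    (hW.1 (Set.mk_mem_prod hu hx₀) (Set.mk_mem_prod hv hx₀) ha hb hab).1,
    fun u hu v hv a b ha hb hab => ?_⟩
  have hu_pos := rpow_pos_of_pos (integral_pos hu) a
  have hv_pos := rpow_pos_of_pos (integral_pos hv) b
  rw [smul_eq_mul, smul_eq_mul, ← log_rpow (integral_pos hu), ← log_rpow (integral_pos hv),
    ← log_mul hu_pos.ne' hv_pos.ne']
  exact log_le_log (mul_pos hu_pos hv_pos)
    (hμ.setIntegral_exp_neg_rpow_mul_rpow_le hW hK hW_meas hW_int hu hv ha hb hab)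

end SatisfiesPrekopaLeindler

end LogConcavity

section Differentiation

open Real

theorem second_deriv_mul_le_deriv_sq_of_concaveOn_log {φ φ' : ℝ → ℝ} {c t₀ : ℝ}
    (hφ_pos : ∀ t, 0 < φ t) (hφ : ∀ t, HasDerivAt φ (φ' t) t) (hφ' : HasDerivAt φ' c t₀)
    (hlog : ConcaveOn ℝ Set.univ fun t => log (φ t)) : c * φ t₀ ≤ φ' t₀ ^ 2 := by
  have log_deriv (t : ℝ) : HasDerivAt (fun t => log (φ t)) (φ' t / φ t) t :=
    (hφ t).log (hφ_pos t).ne'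
  have antitone_log_deriv : Antitone fun t => φ' t / φ t := by
    have := hlog.antitoneOn_deriv fun t _ => (log_deriv t).differentiableAt
    rwa [antitoneOn_univ, funext fun t => (log_deriv t).deriv] at this
  have : (c * φ t₀ - φ' t₀ * φ' t₀) / φ t₀ ^ 2 ≤ 0 :=
    (hφ'.div (hφ t₀) (hφ_pos t₀).ne').nonpos_of_antitone antitone_log_deriv
  rw [div_le_iff₀ (pow_pos (hφ_pos t₀) 2)] at this
  linarith

variable {E G : Type*} [NormedAddCommGroup E] [NormedSpace ℝ E] [NormedAddCommGroup G]
  [NormedSpace ℝ G] {w : E → G} {V : E → ℝ}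

theorem hasDerivAt_setIntegral_comp_add_smul [MeasurableSpace E] [OpensMeasurableSpace E]
    {μ : Measure E} [IsFiniteMeasureOnCompacts μ] {K : Set E} (hK : IsCompact K)
    (hw : ContDiff ℝ 1 w) (v : E) (t₀ : ℝ) :
    HasDerivAt (fun t => ∫ x in K, w (x + t • v) ∂μ)
      (∫ x in K, fderiv ℝ w (x + t₀ • v) v ∂μ) t₀ := by
  have : IsFiniteMeasure (μ.restrict K) := ⟨by simpa using hK.measure_lt_top⟩
  have hasDerivAt_line (x : E) (t : ℝ) :
      HasDerivAt (fun t => w (x + t • v)) (fderiv ℝ w (x + t • v) v) t := by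
    refine (hw.differentiable one_ne_zero).differentiableAt.hasFDerivAt.comp_hasDerivAt t ?_
    simpa using ((hasDerivAt_id t).smul_const v).const_add x
  obtain ⟨C, hC⟩ : ∃ C, ∀ p ∈ Metric.closedBall t₀ 1 ×ˢ K, ‖fderiv ℝ w (p.2 + p.1 • v) v‖ ≤ C :=
    ((isCompact_closedBall t₀ 1).prod hK).exists_bound_of_continuousOn (by fun_prop)
  have aestronglyMeasurable {u : E → G} (hu : Continuous u) :
      AEStronglyMeasurable u (μ.restrict K) :=
    hu.continuousOn.aestronglyMeasurable_of_isCompact hK hK.measurableSet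
  refine (hasDerivAt_integral_of_dominated_loc_of_deriv_le (bound := fun _ => C)
    (Metric.closedBall_mem_nhds t₀ one_pos) (.of_forall fun t => aestronglyMeasurable (by fun_prop))
    (Continuous.continuousOn (by fun_prop) |>.integrableOn_compact hK)
    (aestronglyMeasurable (by fun_prop)) ?_ (integrable_const C)
    (.of_forall fun x t _ => hasDerivAt_line x t)).2
  filter_upwards [ae_restrict_mem hK.measurableSet] with x hx t ht
  exact hC (t, x) ⟨ht, hx⟩

theorem fderiv_exp_neg_apply {x : E} (hV : DifferentiableAt ℝ V x) (v : E) :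
    fderiv ℝ (fun y => exp (-V y)) x v = -(fderiv ℝ V x v * exp (-V x)) := by
  rw [fderiv_exp hV.fun_neg, fderiv_fun_neg]
  simp [mul_comm]

theorem fderiv_fderiv_exp_neg_apply (hV : ContDiff ℝ 2 V) (v x : E) :
    fderiv ℝ (fun y => fderiv ℝ (fun z => exp (-V z)) y v) x v =
      fderiv ℝ V x v ^ 2 * exp (-V x) - fderiv ℝ (fun y => fderiv ℝ V y v) x v * exp (-V x) := by
  have hV₁ : Differentiable ℝ V := hV.differentiable two_ne_zero
  have hV₂ : Differentiable ℝ fun y => fderiv ℝ V y v := by fun_prop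
  simp only [fderiv_exp_neg_apply (hV₁ _)]
  rw [fderiv_fun_neg, fderiv_fun_mul hV₂.differentiableAt (hV₁ x).fun_neg.exp]
  simp only [neg_apply, add_apply, smul_apply, fderiv_exp_neg_apply (hV₁ x), smul_eq_mul]
  ring

end Differentiation

section Variance

variable {E : Type*} [NormedAddCommGroup E] [NormedSpace ℝ E] [FiniteDimensional ℝ E]
  [MeasurableSpace E] [BorelSpace E] (μ : Measure E) [μ.IsAddHaarMeasure] {V : E → ℝ} {K : Set E}

open Real

theorem concaveOn_log_setIntegral_exp_neg_comp_add_smul (hV : ConvexOn ℝ Set.univ V)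
    (hK : Convex ℝ K) (hKc : IsCompact K) (hK₀ : μ K ≠ 0) (v : E) :
    ConcaveOn ℝ Set.univ fun t : ℝ => log (∫ x in K, exp (-V (x + t • v)) ∂μ) := by
  have hV_cont : Continuous V := hV.locallyLipschitz.continuous
  let shear : ℝ × E →ₗ[ℝ] E := .snd ℝ ℝ E + (LinearMap.fst ℝ ℝ E).smulRight v
  have convexOn_shear : ConvexOn ℝ (Set.univ ×ˢ K) fun p : ℝ × E => V (p.2 + p.1 • v) :=
    (hV.comp_linearMap shear).subset (Set.subset_univ _) (convex_univ.prod hK)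
  exact (satisfiesPrekopaLeindler_of_isAddHaarMeasure μ).concaveOn_log_setIntegral_exp_neg
    (W := fun t x => V (x + t • v)) convexOn_shear hKc.measurableSet hK₀
    (fun t _ => Continuous.measurable (by fun_prop))
    fun t _ => (Continuous.continuousOn (by fun_prop)).integrableOn_compact hKc

theorem setIntegral_fderiv_fderiv_exp_neg_mul_le_sq (hV : ConvexOn ℝ Set.univ V)
    (hV₂ : ContDiff ℝ 2 V) (hK : Convex ℝ K) (hKc : IsCompact K) (v : E) :
    (∫ x in K, fderiv ℝ (fun y => fderiv ℝ (fun z => exp (-V z)) y v) x v ∂μ) *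
        ∫ x in K, exp (-V x) ∂μ ≤
      (∫ x in K, fderiv ℝ (fun z => exp (-V z)) x v ∂μ) ^ 2 := by
  obtain hK₀ | hK₀ := eq_or_ne (μ K) 0
  · simp [Measure.restrict_eq_zero.2 hK₀]
  have : NeZero (μ.restrict K) := ⟨by rwa [Ne, Measure.restrict_eq_zero]⟩
  have key := second_deriv_mul_le_deriv_sq_of_concaveOn_log (t₀ := 0)
    (fun t => integral_exp_pos
      ((Continuous.continuousOn (by fun_prop)).integrableOn_compact (μ := μ) hKc))
    (hasDerivAt_setIntegral_comp_add_smul hKc (hV₂.neg.exp.of_le one_le_two) v)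
    (hasDerivAt_setIntegral_comp_add_smul hKc
      (w := fun y => fderiv ℝ (fun z => exp (-V z)) y v) (by fun_prop) v 0)
    (concaveOn_log_setIntegral_exp_neg_comp_add_smul μ hV hK hKc hK₀ v)
  simpa using key

theorem setIntegral_fderiv_sq_mul_exp_neg_mul_le (hV : ConvexOn ℝ Set.univ V)
    (hV₂ : ContDiff ℝ 2 V) (hK : Convex ℝ K) (hKc : IsCompact K) (v : E) :
    (∫ x in K, fderiv ℝ V x v ^ 2 * exp (-V x) ∂μ) * ∫ x in K, exp (-V x) ∂μ ≤
      (∫ x in K, fderiv ℝ (fun y => fderiv ℝ V y v) x v * exp (-V x) ∂μ) *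
          ∫ x in K, exp (-V x) ∂μ +
        (∫ x in K, fderiv ℝ V x v * exp (-V x) ∂μ) ^ 2 := by
  have continuous_fderiv : Continuous fun x => fderiv ℝ V x v :=
    (hV₂.continuous_fderiv two_ne_zero).clm_apply continuous_const
  have key := setIntegral_fderiv_fderiv_exp_neg_mul_le_sq μ hV hV₂ hK hKc v
  simp only [fderiv_fderiv_exp_neg_apply hV₂] at key
  simp only [fderiv_exp_neg_apply (hV₂.differentiable two_ne_zero _), integral_neg, neg_sq] at key
  rw [integral_sub ((Continuous.continuousOn (by fun_prop)).integrableOn_compact hKc)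
    ((Continuous.continuousOn (by fun_prop)).integrableOn_compact hKc), sub_mul] at key
  linarith

end Variance

theorem stmt_6_general {E ι : Type*} [NormedAddCommGroup E] [NormedSpace ℝ E]
    [FiniteDimensional ℝ E] [MeasurableSpace E] [BorelSpace E] (μ : Measure E)
    [μ.IsAddHaarMeasure] [Fintype ι] (v : ι → E) {V : E → ℝ} {K : Set E}
    (hV : ConvexOn ℝ Set.univ V) (hV₂ : ContDiff ℝ 2 V) (hK : Convex ℝ K) (hKc : IsCompact K) :
    (∫ x in K, (∑ i, fderiv ℝ V x (v i) ^ 2) * Real.exp (-V x) ∂μ) *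
        ∫ x in K, Real.exp (-V x) ∂μ ≤
      (∫ x in K, (∑ i, fderiv ℝ (fun y => fderiv ℝ V y (v i)) x (v i)) * Real.exp (-V x) ∂μ) *
          ∫ x in K, Real.exp (-V x) ∂μ +
        ∑ i, (∫ x in K, fderiv ℝ V x (v i) * Real.exp (-V x) ∂μ) ^ 2 := by
  have integral_sum_mul {u : ι → E → ℝ} (hu : ∀ i, Continuous (u i)) :
      ∫ x in K, (∑ i, u i x) * Real.exp (-V x) ∂μ =
        ∑ i, ∫ x in K, u i x * Real.exp (-V x) ∂μ := by
    simp only [Finset.sum_mul]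
    exact integral_finsetSum _ fun i _ =>
      ((hu i).mul hV₂.continuous.neg.rexp).continuousOn.integrableOn_compact hKc
  have continuous_fderiv (u : E) : Continuous fun x => fderiv ℝ V x u :=
    (hV₂.continuous_fderiv two_ne_zero).clm_apply continuous_const
  rw [integral_sum_mul fun i => (continuous_fderiv (v i)).fun_pow 2,
    integral_sum_mul fun i => by fun_prop, Finset.sum_mul, Finset.sum_mul,
    ← Finset.sum_add_distrib]
  exact Finset.sum_le_sum fun i _ =>
    setIntegral_fderiv_sq_mul_exp_neg_mul_le μ hV hV₂ hK hKc (v i)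

/-- For a log-concave measure `μ = e^{-V} dx` with `V` convex and `C²`, and a convex body
`K` with `∫_K ∂V/∂xᵢ dμ = 0` for all `i`, one has `∫_K |∇V|² dμ ≤ ∫_K ΔV dμ`. -/
theorem stmt_6 (n : ℕ) (V : (Fin n → ℝ) → ℝ)
    (hVconv : ConvexOn ℝ Set.univ V) (hV : ContDiff ℝ 2 V)
    (K : Set (Fin n → ℝ)) (hKconv : Convex ℝ K) (hKc : IsCompact K)
    (hKint : (interior K).Nonempty)
    (hbary : ∀ i : Fin n,
      ∫ x in K, fderiv ℝ V x (Pi.single i 1) * Real.exp (-V x) = 0) :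
    ∫ x in K, (∑ i, (fderiv ℝ V x (Pi.single i 1)) ^ 2) * Real.exp (-V x)
      ≤ ∫ x in K,
          (∑ i, fderiv ℝ (fun y => fderiv ℝ V y (Pi.single i 1)) x (Pi.single i 1))
            * Real.exp (-V x) := by
  have : NeZero (volume.restrict K) :=
    ⟨Measure.restrict_eq_zero.not.2 (Measure.measure_pos_of_nonempty_interior volume hKint).ne'⟩
  have mass_pos : 0 < ∫ x in K, Real.exp (-V x) :=
    integral_exp_pos (hV.continuous.neg.rexp.continuousOn.integrableOn_compact hKc)
  refine le_of_mul_le_mul_right ?_ mass_pos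
  simpa [hbary] using
    stmt_6_general volume (fun i : Fin n => Pi.single i (1 : ℝ)) hVconv hV hKconv hKc
end

section
/- For the standard Gaussian measure γ on ℝⁿ and every convex body K containing the origin, (1/γ(K)) ∫_K 1/(|x|²/n + 1) dγ(x) ≥ 1/2. -/
open MeasureTheory

/-!
Let `q` be positively homogeneous of degree `p` on a `d`-dimensional space, `ν = e^{-q} μ` with `μ`
a Haar measure, and let `K` be star-shaped at the origin. Since `(1 - t) q(x) = q(s x)` for
`s = (1 - t)^{1/p}`, the substitution `y = s x` turns `∫_K e^{tq} dν` into `s^{-d} ν(s K)`, which is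
at most `(1 - t)^{-d/p} ν(K)`. Equality holds at `t = 0`, so comparing derivatives there gives
`p ∫_K q dν ≤ d ν(K)`. The Gaussian has `q = |x|²/2`, so the mean of `|x|²/n` over `K` is at most
`1`, and Jensen's inequality for `t ↦ 1/(t + 1)` concludes.
-/

open ProbabilityTheory Set Module
open scoped ENNReal Topology Pointwise

section Mean

variable {Ω : Type*} [MeasurableSpace Ω] {μ : Measure Ω} {X : Ω → ℝ}

lemma integrable_of_nonneg_of_integrable_exp_mul {t : ℝ} (ht : 0 < t) (hX : 0 ≤ᵐ[μ] X)
    (hexp : Integrable (fun ω ↦ Real.exp (t * X ω)) μ) : Integrable X μ := by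
  have hmeas : AEMeasurable X μ := by
    simpa [ht.ne'] using hexp.aemeasurable.log.const_mul t⁻¹
  refine (hexp.const_mul t⁻¹).mono' hmeas.aestronglyMeasurable ?_
  filter_upwards [hX] with ω hω
  rw [Real.norm_of_nonneg hω, le_inv_mul_iff₀ ht]
  linarith [Real.add_one_le_exp (t * X ω)]

lemma integral_le_of_hasDerivWithinAt_of_mgf_le [IsFiniteMeasure μ] {φ : ℝ → ℝ} {a : ℝ}
    (hX : Integrable X μ) (hφ : HasDerivWithinAt φ a (Ioi 0) 0) (hφ₀ : φ 0 = μ.real univ)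
    (hexp : ∀ᶠ t in 𝓝[>] 0, Integrable (fun ω ↦ Real.exp (t * X ω)) μ)
    (hmgf : ∀ᶠ t in 𝓝[>] 0, mgf X μ t ≤ φ t) : ∫ ω, X ω ∂μ ≤ a := by
  have hslope := (hasDerivWithinAt_iff_tendsto_slope' self_notMem_Ioi).1 hφ
  refine ge_of_tendsto hslope ?_
  filter_upwards [hexp, hmgf, self_mem_nhdsWithin] with t hexp hmgf ht
  have htangent : t * ∫ ω, X ω ∂μ + μ.real univ ≤ mgf X μ t := by
    calc t * ∫ ω, X ω ∂μ + μ.real univ = ∫ ω, (t * X ω + 1) ∂μ := by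
          rw [integral_add (hX.const_mul t) (integrable_const 1), integral_const_mul]
          simp
      _ ≤ mgf X μ t := integral_mono ((hX.const_mul t).add (integrable_const 1)) hexp
          fun ω ↦ Real.add_one_le_exp (t * X ω)
  rw [slope_def_field, sub_zero, hφ₀, le_div_iff₀ ht]
  linarith

lemma one_div_setAverage_add_one_le {s : Set Ω} (hs₀ : μ s ≠ 0) (hs : μ s ≠ ∞) (hX : 0 ≤ X)
    (hX_int : IntegrableOn X s μ) :
    1 / ((⨍ ω in s, X ω ∂μ) + 1) ≤ ⨍ ω in s, 1 / (X ω + 1) ∂μ := by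
  have hne : ∀ y ∈ Ici (0 : ℝ), y + 1 ≠ 0 := fun y hy ↦ by linarith [mem_Ici.1 hy]
  have hconv : ConvexOn ℝ (Ici 0) fun y : ℝ ↦ 1 / (y + 1) := by
    have h := ((convexOn_zpow (𝕜 := ℝ) (-1)).translate_left 1).subset
      (s := Ici 0) (fun y hy ↦ lt_add_of_lt_of_nonneg one_pos hy) (convex_Ici 0)
    simpa [Function.comp_def] using h
  have hcont : ContinuousOn (fun y : ℝ ↦ 1 / (y + 1)) (Ici 0) :=
    continuousOn_const.div (by fun_prop) hne
  have hdiv_int : IntegrableOn (fun ω ↦ 1 / (X ω + 1)) s μ := by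
    refine (integrableOn_const (C := (1 : ℝ)) hs).mono'
      ((hX_int.aemeasurable.add_const 1).const_div 1).aestronglyMeasurable (ae_of_all _ fun ω ↦ ?_)
    have hω : 0 ≤ X ω := hX ω
    rw [Real.norm_of_nonneg (by positivity)]
    exact div_le_one_of_le₀ (by linarith) (by positivity)
  exact hconv.map_set_average_le hcont isClosed_Ici hs₀ hs (ae_of_all _ hX) hX_int hdiv_int

end Mean

section Scaling

variable {E : Type*} [NormedAddCommGroup E] [NormedSpace ℝ E] [FiniteDimensional ℝ E]
  [MeasurableSpace E] [BorelSpace E] (μ : Measure E) [μ.IsAddHaarMeasure] {K : Set E} {s : ℝ}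

lemma setLIntegral_comp_smul_of_pos (f : E → ℝ≥0∞) (K : Set E) (hs : 0 < s) :
    ∫⁻ x in K, f (s • x) ∂μ = ENNReal.ofReal (s ^ finrank ℝ E)⁻¹ * ∫⁻ x in s • K, f x ∂μ := by
  let e : E ≃ᵐ E := (Homeomorph.smul (Units.mk0 s hs.ne')).toMeasurableEquiv
  have he : e ⁻¹' (s • K) = K := preimage_image_eq K e.injective
  calc ∫⁻ x in K, f (s • x) ∂μ = ∫⁻ x, f x ∂(μ.restrict K).map e := (lintegral_map_equiv f e).symm
    _ = ∫⁻ x in s • K, f x ∂μ.map (s • ·) := by rw [← he, ← e.restrict_map, he]; rfl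
    _ = _ := by
      rw [Measure.map_addHaar_smul μ hs.ne', Measure.restrict_smul, lintegral_smul_measure,
        abs_of_pos (by positivity), smul_eq_mul]

lemma setLIntegral_comp_smul_le_of_starConvex (f : E → ℝ≥0∞) (hK : StarConvex ℝ 0 K) (hs : 0 < s)
    (hs₁ : s ≤ 1) :
    ∫⁻ x in K, f (s • x) ∂μ ≤ ENNReal.ofReal (s ^ finrank ℝ E)⁻¹ * ∫⁻ x in K, f x ∂μ := by
  have hsub : s • K ⊆ K := by
    rintro _ ⟨x, hx, rfl⟩
    exact hK.smul_mem hx hs.le hs₁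
  rw [setLIntegral_comp_smul_of_pos μ f K hs]
  gcongr

end Scaling

/-- The Gibbs measure `e^{-q} μ` of the energy `q` with respect to `μ`. It is not normalised, and
may be infinite. -/
noncomputable def gibbsMeasure {E : Type*} [MeasurableSpace E] (μ : Measure E) (q : E → ℝ) :
    Measure E :=
  μ.withDensity fun x ↦ ENNReal.ofReal (Real.exp (-q x))

section Gibbs

lemma setLIntegral_gibbsMeasure {E : Type*} [MeasurableSpace E] {μ : Measure E} [SFinite μ]
    {q : E → ℝ} (hq : Measurable q) (K : Set E) (f : E → ℝ) :
    ∫⁻ x in K, ENNReal.ofReal (Real.exp (f x)) ∂gibbsMeasure μ q =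
      ∫⁻ x in K, ENNReal.ofReal (Real.exp (f x - q x)) ∂μ := by
  rw [gibbsMeasure, setLIntegral_withDensity_eq_setLIntegral_mul_non_measurable₀' μ K
    (by fun_prop) _ (ae_of_all _ fun _ ↦ ENNReal.ofReal_lt_top)]
  simp only [Pi.mul_apply, ← ENNReal.ofReal_mul (Real.exp_nonneg _), ← Real.exp_add,
    neg_add_eq_sub]

variable {E : Type*} [NormedAddCommGroup E] [NormedSpace ℝ E] [FiniteDimensional ℝ E]
  [MeasurableSpace E] [BorelSpace E] {μ : Measure E} [μ.IsAddHaarMeasure] {K : Set E}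
  {q : E → ℝ} {p t : ℝ}

lemma setLIntegral_exp_mul_gibbsMeasure_le (hq : Measurable q) (hp : 0 < p)
    (hhom : ∀ s : ℝ, 0 < s → ∀ x, q (s • x) = s ^ p * q x) (hK : StarConvex ℝ 0 K)
    (ht₀ : 0 ≤ t) (ht₁ : t < 1) :
    ∫⁻ x in K, ENNReal.ofReal (Real.exp (t * q x)) ∂gibbsMeasure μ q ≤
      ENNReal.ofReal ((1 - t) ^ (-(finrank ℝ E / p))) * gibbsMeasure μ q K := by
  have ht : 0 < 1 - t := sub_pos.2 ht₁
  set s : ℝ := (1 - t) ^ p⁻¹ with hs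
  have hs₀ : 0 < s := by positivity
  have hs₁ : s ≤ 1 := Real.rpow_le_one ht.le (by linarith) (by positivity)
  have hsp : s ^ p = 1 - t := Real.rpow_inv_rpow ht.le hp.ne'
  have hsd : (s ^ finrank ℝ E)⁻¹ = (1 - t) ^ (-(finrank ℝ E / p)) := by
    rw [Real.rpow_neg ht.le, hs, ← Real.rpow_mul_natCast ht.le, inv_mul_eq_div]
  calc ∫⁻ x in K, ENNReal.ofReal (Real.exp (t * q x)) ∂gibbsMeasure μ q
      = ∫⁻ x in K, ENNReal.ofReal (Real.exp (-q (s • x))) ∂μ := by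
        rw [setLIntegral_gibbsMeasure hq]
        simp only [hhom s hs₀, hsp, sub_mul, one_mul, neg_sub]
    _ ≤ ENNReal.ofReal (s ^ finrank ℝ E)⁻¹ * ∫⁻ x in K, ENNReal.ofReal (Real.exp (-q x)) ∂μ :=
        setLIntegral_comp_smul_le_of_starConvex μ
          (fun x ↦ ENNReal.ofReal (Real.exp (-q x))) hK hs₀ hs₁
    _ = ENNReal.ofReal ((1 - t) ^ (-(finrank ℝ E / p))) * gibbsMeasure μ q K := by
        rw [hsd, gibbsMeasure, withDensity_apply']

lemma integrableOn_exp_mul_gibbsMeasure (hq : Measurable q) (hp : 0 < p)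
    (hhom : ∀ s : ℝ, 0 < s → ∀ x, q (s • x) = s ^ p * q x) (hK : StarConvex ℝ 0 K)
    (hfin : gibbsMeasure μ q K ≠ ∞) (ht₀ : 0 ≤ t) (ht₁ : t < 1) :
    IntegrableOn (fun x ↦ Real.exp (t * q x)) K (gibbsMeasure μ q) := by
  refine ⟨by fun_prop, ?_⟩
  rw [hasFiniteIntegral_iff_ofReal (ae_of_all _ fun _ ↦ (Real.exp_pos _).le)]
  exact (setLIntegral_exp_mul_gibbsMeasure_le hq hp hhom hK ht₀ ht₁).trans_lt
    (ENNReal.mul_lt_top ENNReal.ofReal_lt_top hfin.lt_top)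

lemma mgf_restrict_gibbsMeasure_le (hq : Measurable q) (hp : 0 < p)
    (hhom : ∀ s : ℝ, 0 < s → ∀ x, q (s • x) = s ^ p * q x) (hK : StarConvex ℝ 0 K)
    (hfin : gibbsMeasure μ q K ≠ ∞) (ht₀ : 0 ≤ t) (ht₁ : t < 1) :
    mgf q ((gibbsMeasure μ q).restrict K) t ≤
      (1 - t) ^ (-(finrank ℝ E / p)) * (gibbsMeasure μ q).real K := by
  have hpow : 0 ≤ (1 - t) ^ (-(finrank ℝ E / p)) := Real.rpow_nonneg (sub_pos.2 ht₁).le _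
  rw [mgf, integral_eq_lintegral_of_nonneg_ae (ae_of_all _ fun _ ↦ (Real.exp_pos _).le)
    (by fun_prop)]
  refine (ENNReal.toReal_mono (ENNReal.mul_ne_top ENNReal.ofReal_ne_top hfin)
    (setLIntegral_exp_mul_gibbsMeasure_le hq hp hhom hK ht₀ ht₁)).trans_eq ?_
  rw [ENNReal.toReal_mul, ENNReal.toReal_ofReal hpow, measureReal_def]

lemma integrableOn_gibbsMeasure (hq : Measurable q) (hq₀ : 0 ≤ q) (hp : 0 < p)
    (hhom : ∀ s : ℝ, 0 < s → ∀ x, q (s • x) = s ^ p * q x) (hK : StarConvex ℝ 0 K)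
    (hfin : gibbsMeasure μ q K ≠ ∞) : IntegrableOn q K (gibbsMeasure μ q) :=
  integrable_of_nonneg_of_integrable_exp_mul one_half_pos (ae_of_all _ hq₀)
    (integrableOn_exp_mul_gibbsMeasure hq hp hhom hK hfin one_half_pos.le one_half_lt_one)

lemma setIntegral_gibbsMeasure_le (hq : Measurable q) (hq₀ : 0 ≤ q) (hp : 0 < p)
    (hhom : ∀ s : ℝ, 0 < s → ∀ x, q (s • x) = s ^ p * q x) (hK : StarConvex ℝ 0 K)
    (hfin : gibbsMeasure μ q K ≠ ∞) :
    ∫ x in K, q x ∂gibbsMeasure μ q ≤ finrank ℝ E / p * (gibbsMeasure μ q).real K := by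
  have : IsFiniteMeasure ((gibbsMeasure μ q).restrict K) := isFiniteMeasure_restrict.2 hfin
  have hderiv : HasDerivWithinAt
      (fun t : ℝ ↦ (1 - t) ^ (-(finrank ℝ E / p)) * (gibbsMeasure μ q).real K)
      (finrank ℝ E / p * (gibbsMeasure μ q).real K) (Ioi 0) 0 := by
    have h := (((hasDerivAt_id (0 : ℝ)).const_sub 1).rpow_const
      (p := -(finrank ℝ E / p)) (by simp)).mul_const ((gibbsMeasure μ q).real K)
    simpa using h.hasDerivWithinAt
  have hsmall : ∀ᶠ t : ℝ in 𝓝[>] 0, t ∈ Ioo 0 1 := Ioo_mem_nhdsGT one_pos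
  exact integral_le_of_hasDerivWithinAt_of_mgf_le
    (integrableOn_gibbsMeasure hq hq₀ hp hhom hK hfin) hderiv (by simp)
    (hsmall.mono fun t ht ↦ integrableOn_exp_mul_gibbsMeasure hq hp hhom hK hfin ht.1.le ht.2)
    (hsmall.mono fun t ht ↦ mgf_restrict_gibbsMeasure_le hq hp hhom hK hfin ht.1.le ht.2)

end Gibbs

section Gaussian

lemma pi_withDensity_ofReal {ι : Type*} [Fintype ι] {α : ι → Type*} [∀ i, MeasurableSpace (α i)]
    (μ : ∀ i, Measure (α i)) [∀ i, SigmaFinite (μ i)] {f : ∀ i, α i → ℝ} (hf₀ : ∀ i, 0 ≤ f i)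
    (hf : ∀ i, Integrable (f i) (μ i)) :
    Measure.pi (fun i ↦ (μ i).withDensity fun x ↦ ENNReal.ofReal (f i x)) =
      (Measure.pi μ).withDensity fun x ↦ ENNReal.ofReal (∏ i, f i (x i)) := by
  refine Measure.pi_eq fun s hs ↦ ?_
  have hprod_int : Integrable (fun x : ∀ i, α i ↦ ∏ i, f i (x i))
      (Measure.pi fun i ↦ (μ i).restrict (s i)) := .fintype_prod_dep fun i ↦ (hf i).restrict
  rw [withDensity_apply _ (.univ_pi hs), Measure.restrict_pi_pi,
    ← ofReal_integral_eq_lintegral_ofReal hprod_int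
      (ae_of_all _ fun x ↦ Finset.prod_nonneg fun i _ ↦ hf₀ i (x i)),
    integral_fintype_prod_eq_prod,
    ENNReal.ofReal_prod_of_nonneg fun _ _ ↦ integral_nonneg (hf₀ _)]
  refine Finset.prod_congr rfl fun i _ ↦ ?_
  rw [withDensity_apply _ (hs i),
    ofReal_integral_eq_lintegral_ofReal (hf i).restrict (ae_of_all _ (hf₀ i))]

lemma isOpenPosMeasure_gaussianReal (m : ℝ) {v : NNReal} (hv : v ≠ 0) :
    (gaussianReal m v).IsOpenPosMeasure :=
  (gaussianReal_absolutelyContinuous' m hv).isOpenPosMeasure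

variable {ι : Type*} [Fintype ι] {K : Set (ι → ℝ)}

lemma prod_gaussianPDFReal (x : ι → ℝ) :
    ∏ i, gaussianPDFReal 0 1 (x i) =
      (√(2 * Real.pi))⁻¹ ^ Fintype.card ι * Real.exp (-((∑ i, x i ^ 2) / 2)) := by
  simp [gaussianPDFReal, Finset.prod_mul_distrib, ← Real.exp_sum, Finset.sum_div, neg_div]

lemma exists_isAddHaarMeasure_gibbsMeasure_eq_pi_gaussianReal :
    ∃ μ : Measure (ι → ℝ), μ.IsAddHaarMeasure ∧
      gibbsMeasure μ (fun x ↦ (∑ i, x i ^ 2) / 2) = Measure.pi fun _ ↦ gaussianReal 0 1 := by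
  set c : ℝ := (√(2 * Real.pi))⁻¹ ^ Fintype.card ι
  have hc : 0 < c := by positivity
  refine ⟨ENNReal.ofReal c • volume,
    .smul _ (ENNReal.ofReal_pos.2 hc).ne' ENNReal.ofReal_ne_top, ?_⟩
  simp only [gaussianReal_of_var_ne_zero 0 one_ne_zero, gaussianPDF_def]
  rw [pi_withDensity_ofReal _ (fun _ x ↦ gaussianPDFReal_nonneg 0 1 x)
    fun _ ↦ integrable_gaussianPDFReal 0 1, gibbsMeasure, withDensity_smul_measure,
    ← withDensity_smul _ (by fun_prop), volume_pi]
  congr 1 with x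
  rw [prod_gaussianPDFReal, ENNReal.ofReal_mul hc.le, Pi.smul_apply, smul_eq_mul]

lemma integrable_sum_sq_pi_gaussianReal :
    Integrable (fun x : ι → ℝ ↦ ∑ i, x i ^ 2) (Measure.pi fun _ ↦ gaussianReal 0 1) :=
  integrable_finsetSum _ fun i _ ↦
    integrable_comp_eval (μ := fun _ : ι ↦ gaussianReal 0 1) (i := i)
      (memLp_id_gaussianReal 2).integrable_sq

lemma setIntegral_sum_sq_pi_gaussianReal_le (hK : StarConvex ℝ 0 K) :
    ∫ x in K, ∑ i, x i ^ 2 ∂(Measure.pi fun _ ↦ gaussianReal 0 1) ≤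
      Fintype.card ι * (Measure.pi fun _ ↦ gaussianReal 0 1).real K := by
  obtain ⟨μ, _, hμ⟩ := exists_isAddHaarMeasure_gibbsMeasure_eq_pi_gaussianReal (ι := ι)
  have hhom (s : ℝ) (_ : 0 < s) (x : ι → ℝ) :
      (∑ i, (s • x) i ^ 2) / 2 = s ^ (2 : ℝ) * ((∑ i, x i ^ 2) / 2) := by
    simp only [Pi.smul_apply, smul_eq_mul, mul_pow, ← Finset.mul_sum, Real.rpow_two, mul_div_assoc]
  have hmoment := setIntegral_gibbsMeasure_le (μ := μ) (q := fun x ↦ (∑ i, x i ^ 2) / 2)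
    (by fun_prop) (fun x ↦ by positivity) two_pos hhom hK (hμ ▸ measure_ne_top _ K)
  rw [hμ, integral_div, finrank_pi] at hmoment
  linarith

end Gaussian

theorem stmt_9_general {ι : Type*} [Fintype ι] [Nonempty ι] {K : Set (ι → ℝ)}
    (hK : StarConvex ℝ 0 K) (hγK : Measure.pi (fun _ : ι ↦ gaussianReal 0 1) K ≠ 0) :
    1 / 2 ≤ ⨍ x in K, 1 / ((∑ i, x i ^ 2) / Fintype.card ι + 1)
      ∂(Measure.pi fun _ ↦ gaussianReal 0 1) := by
  set γ : Measure (ι → ℝ) := Measure.pi fun _ ↦ gaussianReal 0 1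
  set m : ℝ := ⨍ x in K, (∑ i, x i ^ 2) / Fintype.card ι ∂γ with hm
  have hcard : (0 : ℝ) < Fintype.card ι := by exact_mod_cast Fintype.card_pos
  have hm₀ : 0 ≤ m := integral_nonneg fun x ↦ by positivity
  have hm₁ : m ≤ 1 := by
    rw [hm, setAverage_eq, integral_div, smul_eq_mul, inv_mul_eq_div]
    refine div_le_one_of_le₀ ?_ measureReal_nonneg
    rw [div_le_iff₀' hcard]
    exact setIntegral_sum_sq_pi_gaussianReal_le hK
  calc (1 / 2 : ℝ) ≤ 1 / (m + 1) := one_div_le_one_div_of_le (by linarith) (by linarith)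
    _ ≤ _ := one_div_setAverage_add_one_le hγK (measure_ne_top γ K) (fun x ↦ by positivity)
      (integrable_sum_sq_pi_gaussianReal.div_const _).integrableOn

/-- For the standard Gaussian measure `γ` on `ℝⁿ` and every convex body `K` containing the
origin, `(1/γ(K)) ∫_K 1/(|x|²/n + 1) dγ ≥ 1/2`. -/
theorem stmt_9 (n : ℕ) (hn : 0 < n) (K : Set (Fin n → ℝ))
    (hKconv : Convex ℝ K) (hKc : IsCompact K) (hKint : (interior K).Nonempty)
    (h0 : (0 : Fin n → ℝ) ∈ K)
    (γ : Measure (Fin n → ℝ))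
    (hγ : γ = Measure.pi fun _ : Fin n => ProbabilityTheory.gaussianReal 0 1) :
    (1 / 2 : ℝ) ≤ (1 / (γ K).toReal) * ∫ x in K, 1 / ((∑ i, x i ^ 2) / n + 1) ∂γ := by
  subst hγ
  have : Nonempty (Fin n) := ⟨⟨0, hn⟩⟩
  have := isOpenPosMeasure_gaussianReal 0 one_ne_zero
  have hγK := (Measure.measure_pos_of_nonempty_interior
    (Measure.pi fun _ : Fin n ↦ gaussianReal 0 1) hKint).ne'
  simpa [setAverage_eq, measureReal_def] using stmt_9_general (hKconv.starConvex h0) hγK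
end

section
/- Let ψ : ℝ → ℝ be a C¹, 2π-periodic function. Then (1/2π)∫_{−π}^{π} ψ² dx − ((1/2π)∫_{−π}^{π} ψ dx)² ≤ (1/2π)∫_{−π}^{π} (ψ')² dx. -/
/-!
Expand `f` in a Fourier series on `[a, b]`. By Parseval, the mean square of `f` minus the squared
modulus of its mean is the sum of `‖f̂ n‖ ^ 2` over the *nonzero* frequencies `n`. Integration by
parts, whose boundary term vanishes because `f a = f b`, gives
`‖f̂ n‖ = (b - a) / (2 * π * |n|) * ‖f̂' n‖ ≤ (b - a) / (2 * π) * ‖f̂' n‖` at those frequencies, and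
a second use of Parseval, for the derivative, finishes the proof.
-/

open Real
open MeasureTheory Set

theorem memLp_restrict_of_continuousOn_isCompact {X E : Type*} [TopologicalSpace X] [T2Space X]
    [MeasurableSpace X] [OpensMeasurableSpace X] {μ : Measure X} [IsFiniteMeasureOnCompacts μ]
    [NormedAddCommGroup E] {s K : Set X} {f : X → E} (hf : ContinuousOn f K) (hK : IsCompact K)
    (hsK : s ⊆ K) (p : ENNReal) : MemLp f p (μ.restrict s) := by
  have : IsFiniteMeasure (μ.restrict K) := isFiniteMeasure_restrict.2 hK.measure_ne_top
  obtain ⟨C, hC⟩ := hK.exists_bound_of_continuousOn hf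
  have hfK : MemLp f p (μ.restrict K) :=
    .of_bound (hf.aestronglyMeasurable_of_isCompact hK hK.measurableSet) C
      (ae_restrict_of_forall_mem hK.measurableSet hC)
  exact hfK.mono_measure (Measure.restrict_mono_set μ hsK)

section Interval

variable {a b : ℝ}

theorem intervalAverage_sub_const {E : Type*} [NormedAddCommGroup E] [NormedSpace ℝ E]
    [CompleteSpace E] {f : ℝ → E} (hab : a ≠ b) (hf : IntervalIntegrable f volume a b) (c : E) :
    ⨍ x in a..b, (f x - c) = (⨍ x in a..b, f x) - c := by
  have hba : b - a ≠ 0 := sub_ne_zero.2 hab.symm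
  rw [interval_average_eq, interval_average_eq,
    intervalIntegral.integral_sub hf intervalIntegrable_const, intervalIntegral.integral_const,
    smul_sub, inv_smul_smul₀ hba]

theorem fourierCoeffOn_zero_eq_intervalAverage {E : Type*} [NormedAddCommGroup E] [NormedSpace ℂ E]
    (hab : a < b) (f : ℝ → E) : fourierCoeffOn hab f 0 = ⨍ x in a..b, f x := by
  simp only [fourierCoeffOn_eq_integral, neg_zero, fourier_zero, one_smul, one_div,
    interval_average_eq]

variable {f f' : ℝ → ℂ}

theorem hasSum_sq_norm_fourierCoeffOn_ne_zero (hab : a < b)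
    (hf : MemLp f 2 (volume.restrict (Ioc a b))) :
    HasSum (fun n : ℤ ↦ if n = 0 then 0 else ‖fourierCoeffOn hab f n‖ ^ 2)
      ((⨍ x in a..b, ‖f x‖ ^ 2) - ‖⨍ x in a..b, f x‖ ^ 2) := by
  rw [← fourierCoeffOn_zero_eq_intervalAverage hab, interval_average_eq]
  exact hasSum_ite_sub_hasSum (hasSum_sq_fourierCoeffOn hab hf) 0

theorem fourierCoeffOn_eq_div_mul_fourierCoeffOn_deriv (hab : a < b)
    (hf : ContinuousOn f (Icc a b))
    (hff' : ∀ x ∈ Ioo a b, HasDerivWithinAt f (f' x) (Ioi x) x)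
    (hf' : IntervalIntegrable f' volume a b) (hends : f a = f b) {n : ℤ} (hn : n ≠ 0) :
    fourierCoeffOn hab f n = (b - a) / (2 * π * Complex.I * n) * fourierCoeffOn hab f' n := by
  rw [← uIcc_of_le hab.le] at hf
  rw [fourierCoeffOn_of_hasDeriv_right hab hn hf
    (by rwa [min_eq_left hab.le, max_eq_right hab.le]) hf', hends]
  ring

theorem norm_fourierCoeffOn_le_mul_norm_fourierCoeffOn_deriv (hab : a < b)
    (hf : ContinuousOn f (Icc a b))
    (hff' : ∀ x ∈ Ioo a b, HasDerivWithinAt f (f' x) (Ioi x) x)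
    (hf' : IntervalIntegrable f' volume a b) (hends : f a = f b) {n : ℤ} (hn : n ≠ 0) :
    ‖fourierCoeffOn hab f n‖ ≤ (b - a) / (2 * π) * ‖fourierCoeffOn hab f' n‖ := by
  have hba : 0 ≤ b - a := sub_nonneg.2 hab.le
  have one_le_abs : (1 : ℝ) ≤ |(n : ℝ)| := by exact_mod_cast Int.one_le_abs hn
  calc ‖fourierCoeffOn hab f n‖
      = (b - a) / (2 * π * |(n : ℝ)|) * ‖fourierCoeffOn hab f' n‖ := by
        rw [fourierCoeffOn_eq_div_mul_fourierCoeffOn_deriv hab hf hff' hf' hends hn, norm_mul,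
          norm_div, ← Complex.ofReal_sub, Complex.norm_of_nonneg hba]
        simp [abs_of_pos pi_pos]
    _ ≤ (b - a) / (2 * π) * ‖fourierCoeffOn hab f' n‖ := by
        gcongr (b - a) / ?_ * _
        exact le_mul_of_one_le_right two_pi_pos.le one_le_abs

theorem stmt_13_general (hab : a < b) (hf : ContinuousOn f (Icc a b))
    (hff' : ∀ x ∈ Ioo a b, HasDerivWithinAt f (f' x) (Ioi x) x)
    (hf' : MemLp f' 2 (volume.restrict (Ioc a b))) (hends : f a = f b) :
    (⨍ x in a..b, ‖f x‖ ^ 2) - ‖⨍ x in a..b, f x‖ ^ 2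
      ≤ ((b - a) / (2 * π)) ^ 2 * ⨍ x in a..b, ‖f' x‖ ^ 2 := by
  have hf_memLp : MemLp f 2 (volume.restrict (Ioc a b)) :=
    memLp_restrict_of_continuousOn_isCompact hf isCompact_Icc Ioc_subset_Icc_self 2
  have hf'_int : IntervalIntegrable f' volume a b :=
    (intervalIntegrable_iff_integrableOn_Ioc_of_le hab.le).2 (hf'.integrable one_le_two)
  rw [interval_average_eq (fun x ↦ ‖f' x‖ ^ 2)]
  refine hasSum_le (fun n ↦ ?_) (hasSum_sq_norm_fourierCoeffOn_ne_zero hab hf_memLp)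
    ((hasSum_sq_fourierCoeffOn hab hf').mul_left _)
  split_ifs with hn
  · positivity
  · rw [← mul_pow]
    gcongr
    exact norm_fourierCoeffOn_le_mul_norm_fourierCoeffOn_deriv hab hf hff' hf'_int hends hn

theorem intervalAverage_sq_sub_sq_intervalAverage_le {g g' : ℝ → ℝ} (hab : a < b)
    (hg : ContinuousOn g (Icc a b)) (hgg' : ∀ x ∈ Ioo a b, HasDerivWithinAt g (g' x) (Ioi x) x)
    (hg' : MemLp g' 2 (volume.restrict (Ioc a b))) (hends : g a = g b) :
    (⨍ x in a..b, g x ^ 2) - (⨍ x in a..b, g x) ^ 2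
      ≤ ((b - a) / (2 * π)) ^ 2 * ⨍ x in a..b, g' x ^ 2 := by
  have average_ofReal : ⨍ x in a..b, (g x : ℂ) = ↑(⨍ x in a..b, g x) := integral_ofReal
  simpa only [average_ofReal, Complex.norm_real, norm_eq_abs, sq_abs] using
    stmt_13_general (f := fun x ↦ (g x : ℂ)) hab
      (Complex.continuous_ofReal.comp_continuousOn hg)
      (fun x hx ↦ (hgg' x hx).ofReal_comp) hg'.ofReal (congrArg _ hends)

end Interval

/-- Wirtinger/Poincaré inequality on the circle: for `ψ` C¹ and 2π-periodic,
`(1/2π)∫ψ² − ((1/2π)∫ψ)² ≤ (1/2π)∫(ψ')²`. -/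
theorem stmt_13 (ψ : ℝ → ℝ) (hψ : ContDiff ℝ 1 ψ)
    (hper : ∀ x, ψ (x + 2 * π) = ψ x) :
    (1 / (2 * π)) * ∫ x in (-π)..π, ψ x ^ 2
        - ((1 / (2 * π)) * ∫ x in (-π)..π, ψ x) ^ 2
      ≤ (1 / (2 * π)) * ∫ x in (-π)..π, (deriv ψ x) ^ 2 := by
  have hπ : -π < π := neg_lt_self pi_pos
  have hlen : π - -π = 2 * π := by ring
  have hends : ψ (-π) = ψ π := by rw [← hper (-π), ← hlen, add_sub_cancel]
  have hψ' : MemLp (deriv ψ) 2 (volume.restrict (Ioc (-π) π)) :=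
    memLp_restrict_of_continuousOn_isCompact (hψ.continuous_deriv le_rfl).continuousOn
      isCompact_Icc Ioc_subset_Icc_self 2
  have hψ_sq : IntervalIntegrable (fun x ↦ ψ x ^ 2) volume (-π) π :=
    (hψ.continuous.pow 2).intervalIntegrable _ _
  have wirtinger := intervalAverage_sq_sub_sq_intervalAverage_le hπ hψ.continuous.continuousOn
    (fun x _ ↦ (hψ.differentiable one_ne_zero x).hasDerivAt.hasDerivWithinAt) hψ' hends
  -- In the goal, `∫` extends over the subtraction: the squared mean is part of the integrand.
  rw [← intervalAverage_sub_const hπ.ne hψ_sq] at wirtinger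
  simpa [interval_average_eq, hlen] using wirtinger
end
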